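/- arXiv:1106.4583 — 3 statements merged into one kernel-verified Lean document; each statement's English description precedes it below -/
import Mathlib

section
/- r(s) tends to +∞ as s → +∞ and as s → −∞, and r has exactly one extremum, a global minimum: there is a unique s₀ ∈ ℝ with τ(s₀) = 0 (equivalently, with (r²)'(s₀) = 0, since (r²)' = 2τ), τ(s) < 0 for all s < s₀ and τ(s) > 0 for all s > s₀, so r is strictly decreasing on (−∞, s₀] and strictly increasing on [s₀, ∞). -/
open Filter Topology

/- Context: `h > 0`; `τ, ν : ℝ → ℝ` solve the ODE system of the generating curve of a
helicoidal surface of pitch `h` rotating with unit angular speed under mean curvature flow: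
`τ' = ((τ² + h²)/(τ² + ν² + h²))(1 + τν)`, `ν' = (τν − τ²(τ² + h²))/(τ² + ν² + h²)`,
with `r = √(τ² + ν²)` and signed curvature `k = (τ(τ² + h²) − ν)/(r² + h²)`. -/

/-!
Since `(r²)' = 2τ` and, by AM-GM, `2τ' + M τ² ≥ h² / (M + h²)` wherever `r² ≤ M`, the function
`exp (M r² / 4)` is uniformly convex on every interval on which `r² ≤ M`. So `r` is unbounded in
each direction, which forces `τ` to take both signs. Moreover `τ' > 0` at each zero of `τ`, so `τ`
changes sign exactly once, from negative to positive.
-/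

lemma tendsto_atTop_of_eventually_le_deriv {f f' : ℝ → ℝ} (hf : ∀ s, HasDerivAt f (f' s) s)
    {c : ℝ} (hc : 0 < c) (hcf' : ∀ᶠ s in atTop, c ≤ f' s) : Tendsto f atTop atTop := by
  obtain ⟨a, ha⟩ := eventually_atTop.1 hcf'
  have affine_le : ∀ᶠ s in atTop, f a + c * (s - a) ≤ f s := by
    filter_upwards [eventually_ge_atTop a] with s hs
    have increment : c * (s - a) ≤ f s - f a :=
      (convex_Ici a).mul_sub_le_image_sub_of_le_deriv
        (fun t _ ↦ (hf t).continuousAt.continuousWithinAt)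
        (fun t _ ↦ (hf t).differentiableAt.differentiableWithinAt)
        (fun t ht ↦ (hf t).deriv ▸ ha t (interior_subset ht)) a Set.self_mem_Ici s hs hs
    linarith
  refine tendsto_atTop_mono' _ affine_le (tendsto_atTop_add_const_left _ _ ?_)
  exact (tendsto_atTop_add_const_right _ (-a) tendsto_id).const_mul_atTop hc

lemma pos_of_nonneg_of_deriv_pos_of_eq_zero {g g' : ℝ → ℝ} (hg : ∀ s, HasDerivAt g (g' s) s)
    (hg' : ∀ s, g s = 0 → 0 < g' s) {a b : ℝ} (ha : 0 ≤ g a) (hab : a < b) : 0 < g b := by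
  have nonneg : ∀ s, a ≤ s → 0 ≤ g s := fun s hs ↦ neg_nonpos.1 <|
    image_le_of_deriv_right_lt_deriv_boundary (f := fun t ↦ -g t) (B := fun _ ↦ 0)
      (fun t _ ↦ (hg t).neg.continuousAt.continuousWithinAt)
      (fun t _ ↦ (hg t).neg.hasDerivWithinAt) (neg_nonpos.2 ha) (fun t ↦ hasDerivAt_const t 0)
      (fun t _ ht ↦ neg_lt_zero.2 (hg' t (neg_eq_zero.1 ht))) ⟨hs, le_rfl⟩
  refine (nonneg b hab.le).lt_of_ne' fun hb ↦ (hg' b hb).ne' ?_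
  have isLocalMin : IsLocalMin g b := by
    filter_upwards [Ioi_mem_nhds hab] with s hs
    exact hb.le.trans (nonneg s hs.le)
  exact isLocalMin.hasDerivAt_eq_zero (hg b)

/-- `f` is twice differentiable with derivatives `f'` and `f''`, and on each sublevel set
`{f ≤ M}` some exponential `exp (K f)` is uniformly convex. The latter is expressed through
`(exp (K f))'' = K (f'' + K f' ^ 2) exp (K f)`, and is what makes the critical point of `f` unique
and `f` coercive. -/
structure ExpConvexOnSublevels (f f' f'' : ℝ → ℝ) : Prop where
  hasDerivAt : ∀ s, HasDerivAt f (f' s) s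
  hasDerivAt_deriv : ∀ s, HasDerivAt f' (f'' s) s
  exists_le : ∀ M, ∃ K > 0, ∃ c > 0, ∀ s, f s ≤ M → c ≤ f'' s + K * f' s ^ 2

namespace ExpConvexOnSublevels

variable {f f' f'' : ℝ → ℝ}

lemma comp_neg (hf : ExpConvexOnSublevels f f' f'') :
    ExpConvexOnSublevels (fun s ↦ f (-s)) (fun s ↦ -f' (-s)) (fun s ↦ f'' (-s)) where
  hasDerivAt s := ((hf.hasDerivAt (-s)).comp s (hasDerivAt_neg s)).congr_deriv (mul_neg_one _)
  hasDerivAt_deriv s :=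
    ((hf.hasDerivAt_deriv (-s)).comp s (hasDerivAt_neg s)).neg.congr_deriv (by ring)
  exists_le M := by
    obtain ⟨K, hK, c, hc, hle⟩ := hf.exists_le M
    exact ⟨K, hK, c, hc, fun s hs ↦ by simpa using hle (-s) hs⟩

lemma deriv_deriv_pos_of_deriv_eq_zero (hf : ExpConvexOnSublevels f f' f'') {s : ℝ}
    (hs : f' s = 0) : 0 < f'' s := by
  obtain ⟨K, -, c, hc, hle⟩ := hf.exists_le (f s)
  simpa [hs] using hc.trans_le (hle s le_rfl)

lemma deriv_pos_of_lt (hf : ExpConvexOnSublevels f f' f'') {a b : ℝ} (ha : 0 ≤ f' a)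
    (hab : a < b) : 0 < f' b :=
  pos_of_nonneg_of_deriv_pos_of_eq_zero hf.hasDerivAt_deriv
    (fun _ ↦ hf.deriv_deriv_pos_of_deriv_eq_zero) ha hab

lemma deriv_neg_of_lt (hf : ExpConvexOnSublevels f f' f'') {a b : ℝ} (hb : f' b ≤ 0)
    (hab : a < b) : f' a < 0 :=
  not_le.1 fun ha ↦ hb.not_gt (hf.deriv_pos_of_lt ha hab)

lemma frequently_lt (hf : ExpConvexOnSublevels f f' f'') (hbdd : BddBelow (Set.range f)) (M : ℝ) :
    ∃ᶠ s in atTop, M < f s := by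
  by_contra not_frequently
  have le_M : ∀ᶠ s in atTop, f s ≤ M := by simpa using not_frequently
  obtain ⟨m, hm⟩ := hbdd
  obtain ⟨K, hK, c, hc, hle⟩ := hf.exists_le M
  have exp_deriv (s : ℝ) :
      HasDerivAt (fun t ↦ Real.exp (K * f t)) (Real.exp (K * f s) * (K * f' s)) s :=
    ((hf.hasDerivAt s).const_mul K).exp
  have exp_deriv_deriv (s : ℝ) : HasDerivAt (fun t ↦ Real.exp (K * f t) * (K * f' t))
      (K * Real.exp (K * f s) * (f'' s + K * f' s ^ 2)) s :=
    ((exp_deriv s).mul ((hf.hasDerivAt_deriv s).const_mul K)).congr_deriv (by ring)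
  have deriv_tendsto : Tendsto (fun t ↦ Real.exp (K * f t) * (K * f' t)) atTop atTop := by
    refine tendsto_atTop_of_eventually_le_deriv exp_deriv_deriv
      (c := K * Real.exp (K * m) * c) (by positivity) ?_
    filter_upwards [le_M] with s hs
    have hms : m ≤ f s := hm ⟨s, rfl⟩
    gcongr
    exact hle s hs
  have exp_tendsto : Tendsto (fun t ↦ Real.exp (K * f t)) atTop atTop :=
    tendsto_atTop_of_eventually_le_deriv exp_deriv one_pos (deriv_tendsto.eventually_ge_atTop 1)
  obtain ⟨s, hs, hsM⟩ :=
    ((exp_tendsto.eventually_gt_atTop (Real.exp (K * M))).and le_M).exists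
  exact hs.not_ge (by gcongr)

lemma exists_deriv_pos (hf : ExpConvexOnSublevels f f' f'') (hbdd : BddBelow (Set.range f)) :
    ∃ s, 0 < f' s := by
  by_contra! nonpos
  have anti : Antitone f := antitone_of_hasDerivAt_nonpos hf.hasDerivAt nonpos
  obtain ⟨s, hs, hs0⟩ :=
    ((hf.frequently_lt hbdd (f 0)).and_eventually (eventually_ge_atTop 0)).exists
  exact hs.not_ge (anti hs0)

lemma exists_deriv_neg (hf : ExpConvexOnSublevels f f' f'') (hbdd : BddBelow (Set.range f)) :
    ∃ s, f' s < 0 := by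
  obtain ⟨s, hs⟩ := hf.comp_neg.exists_deriv_pos (hbdd.mono (Set.range_comp_subset_range _ f))
  exact ⟨-s, neg_pos.1 hs⟩

lemma exists_deriv_eq_zero (hf : ExpConvexOnSublevels f f' f'')
    (hbdd : BddBelow (Set.range f)) : ∃ s, f' s = 0 := by
  obtain ⟨a, ha⟩ := hf.exists_deriv_neg hbdd
  obtain ⟨b, hb⟩ := hf.exists_deriv_pos hbdd
  have continuous_deriv : Continuous f' :=
    continuous_iff_continuousAt.2 fun s ↦ (hf.hasDerivAt_deriv s).continuousAt
  exact mem_range_of_exists_le_of_exists_ge continuous_deriv ⟨a, ha.le⟩ ⟨b, hb.le⟩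

lemma strictMonoOn_Ici (hf : ExpConvexOnSublevels f f' f'') {a : ℝ} (ha : 0 ≤ f' a) :
    StrictMonoOn f (Set.Ici a) :=
  strictMonoOn_of_hasDerivWithinAt_pos (convex_Ici a)
    (fun s _ ↦ (hf.hasDerivAt s).continuousAt.continuousWithinAt)
    (fun s _ ↦ (hf.hasDerivAt s).hasDerivWithinAt)
    (fun _ hs ↦ hf.deriv_pos_of_lt ha (by simpa using hs))

lemma strictAntiOn_Iic (hf : ExpConvexOnSublevels f f' f'') {a : ℝ} (ha : f' a ≤ 0) :
    StrictAntiOn f (Set.Iic a) :=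
  strictAntiOn_of_hasDerivWithinAt_neg (convex_Iic a)
    (fun s _ ↦ (hf.hasDerivAt s).continuousAt.continuousWithinAt)
    (fun s _ ↦ (hf.hasDerivAt s).hasDerivWithinAt)
    (fun _ hs ↦ hf.deriv_neg_of_lt ha (by simpa using hs))

lemma tendsto_atTop (hf : ExpConvexOnSublevels f f' f'') (hbdd : BddBelow (Set.range f)) :
    Tendsto f atTop atTop := by
  obtain ⟨a, ha⟩ := hf.exists_deriv_pos hbdd
  refine Filter.tendsto_atTop.2 fun M ↦ ?_
  obtain ⟨s, hs, has⟩ := ((hf.frequently_lt hbdd M).and_eventually (eventually_ge_atTop a)).exists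
  filter_upwards [eventually_ge_atTop s] with t ht
  exact hs.le.trans ((hf.strictMonoOn_Ici ha.le).monotoneOn has (has.trans ht) ht)

lemma tendsto_atBot (hf : ExpConvexOnSublevels f f' f'') (hbdd : BddBelow (Set.range f)) :
    Tendsto f atBot atTop := by
  have tendsto_comp_neg : Tendsto (fun s ↦ f (-s)) atTop atTop :=
    hf.comp_neg.tendsto_atTop (hbdd.mono (Set.range_comp_subset_range _ f))
  simpa [Function.comp_def] using tendsto_comp_neg.comp tendsto_neg_atBot_atTop

end ExpConvexOnSublevels

-- `τ' = 1 + k ν`, `ν' = -k τ` are the Frenet equations for the components of the position vector.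
lemma hasDerivAt_sq_add_sq_of_frenet {τ ν : ℝ → ℝ} {k s : ℝ}
    (hτ : HasDerivAt τ (1 + k * ν s) s) (hν : HasDerivAt ν (-(k * τ s)) s) :
    HasDerivAt (fun t ↦ τ t ^ 2 + ν t ^ 2) (2 * τ s) s :=
  ((hτ.pow 2).add (hν.pow 2)).congr_deriv (by ring)

/-- The signed curvature that the generating curve of a helicoidal surface of pitch `h`, rotating
with unit angular speed under mean curvature flow, has at a point with tangential component `x`
and normal component `y`. -/
noncomputable def helicoidalCurvature (h x y : ℝ) : ℝ :=
  (x * (x ^ 2 + h ^ 2) - y) / (x ^ 2 + y ^ 2 + h ^ 2)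

lemma one_add_helicoidalCurvature_mul {h : ℝ} (hh : h ≠ 0) (x y : ℝ) :
    1 + helicoidalCurvature h x y * y =
      (x ^ 2 + h ^ 2) / (x ^ 2 + y ^ 2 + h ^ 2) * (1 + x * y) := by
  have : x ^ 2 + y ^ 2 + h ^ 2 ≠ 0 := by positivity
  rw [helicoidalCurvature]
  field_simp
  ring

lemma neg_helicoidalCurvature_mul (h x y : ℝ) :
    -(helicoidalCurvature h x y * x) =
      (x * y - x ^ 2 * (x ^ 2 + h ^ 2)) / (x ^ 2 + y ^ 2 + h ^ 2) := by
  rw [helicoidalCurvature]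
  ring

lemma div_le_two_mul_one_add_helicoidalCurvature_mul {h : ℝ} (hh : h ≠ 0) {x y M : ℝ}
    (hM : x ^ 2 + y ^ 2 ≤ M) :
    h ^ 2 / (M + h ^ 2) ≤ 2 * (1 + helicoidalCurvature h x y * y) + M * x ^ 2 := by
  rw [one_add_helicoidalCurvature_mul hh]
  set A := (x ^ 2 + h ^ 2) / (x ^ 2 + y ^ 2 + h ^ 2) with hA
  have A_nonneg : 0 ≤ A := by positivity
  have A_le_one : A ≤ 1 := div_le_one_of_le₀ (by linarith [sq_nonneg y]) (by positivity)
  have le_A : h ^ 2 / (M + h ^ 2) ≤ A := by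
    rw [hA]
    gcongr
    exact le_add_of_nonneg_left (sq_nonneg x)
  have am_gm : 1 - (x * y) ^ 2 ≤ 2 * (1 + x * y) := by linarith [sq_nonneg (1 + x * y)]
  have cross_le : A * (x * y) ^ 2 ≤ M * x ^ 2 :=
    calc A * (x * y) ^ 2 ≤ (x * y) ^ 2 := mul_le_of_le_one_left (sq_nonneg _) A_le_one
      _ = y ^ 2 * x ^ 2 := by ring
      _ ≤ M * x ^ 2 := by gcongr; linarith [sq_nonneg x]
  calc h ^ 2 / (M + h ^ 2) ≤ A := le_A
    _ ≤ A * (1 - (x * y) ^ 2) + M * x ^ 2 := by linarith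
    _ ≤ A * (2 * (1 + x * y)) + M * x ^ 2 := by
      linarith [mul_le_mul_of_nonneg_left am_gm A_nonneg]
    _ = 2 * (A * (1 + x * y)) + M * x ^ 2 := by ring

lemma expConvexOnSublevels_sq_add_sq {h : ℝ} (hh : h ≠ 0) {τ ν : ℝ → ℝ}
    (hτ : ∀ s, HasDerivAt τ (1 + helicoidalCurvature h (τ s) (ν s) * ν s) s)
    (hν : ∀ s, HasDerivAt ν (-(helicoidalCurvature h (τ s) (ν s) * τ s)) s) :
    ExpConvexOnSublevels (fun s ↦ τ s ^ 2 + ν s ^ 2) (fun s ↦ 2 * τ s)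
      (fun s ↦ 2 * (1 + helicoidalCurvature h (τ s) (ν s) * ν s)) where
  hasDerivAt s := hasDerivAt_sq_add_sq_of_frenet (hτ s) (hν s)
  hasDerivAt_deriv s := (hτ s).const_mul 2
  exists_le M := by
    have hM : 0 < max M 1 := lt_max_of_lt_right one_pos
    refine ⟨max M 1 / 4, div_pos hM four_pos, h ^ 2 / (max M 1 + h ^ 2), by positivity,
      fun s hs ↦ ?_⟩
    have bound :=
      div_le_two_mul_one_add_helicoidalCurvature_mul hh (hs.trans (le_max_left M 1))
    linarith

/-- Lemma 4.7. `r → ∞` in each direction and `r` has exactly one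
extremum, a global minimum: there is a unique zero `s₀` of `τ` (where `(r²)' = 2τ`),
`τ < 0` before it and `τ > 0` after it, and `r` is strictly decreasing on `(−∞, s₀]`
and strictly increasing on `[s₀, ∞)`. -/
theorem r_tendsto_infinity_unique_minimum
    (h : ℝ) (hh : 0 < h) (τ ν : ℝ → ℝ)
    (hτ : ∀ s : ℝ, HasDerivAt τ
      ((τ s ^ 2 + h ^ 2) / (τ s ^ 2 + ν s ^ 2 + h ^ 2) * (1 + τ s * ν s)) s)
    (hν : ∀ s : ℝ, HasDerivAt ν
      ((τ s * ν s - τ s ^ 2 * (τ s ^ 2 + h ^ 2)) / (τ s ^ 2 + ν s ^ 2 + h ^ 2)) s)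
    (r : ℝ → ℝ) (hr : ∀ s : ℝ, r s = Real.sqrt (τ s ^ 2 + ν s ^ 2)) :
    Tendsto r atTop atTop ∧ Tendsto r atBot atTop ∧
    ∃ s₀ : ℝ, τ s₀ = 0 ∧ (∀ s : ℝ, τ s = 0 → s = s₀) ∧
      (∀ s : ℝ, s < s₀ → τ s < 0) ∧ (∀ s : ℝ, s₀ < s → 0 < τ s) ∧
      StrictAntiOn r (Set.Iic s₀) ∧ StrictMonoOn r (Set.Ici s₀) := by
  obtain rfl : r = fun s ↦ Real.sqrt (τ s ^ 2 + ν s ^ 2) := funext hr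
  simp only [← one_add_helicoidalCurvature_mul hh.ne', ← neg_helicoidalCurvature_mul] at hτ hν
  have convex := expConvexOnSublevels_sq_add_sq hh.ne' hτ hν
  have nonneg (s : ℝ) : 0 ≤ τ s ^ 2 + ν s ^ 2 := by positivity
  have bdd : BddBelow (Set.range fun s ↦ τ s ^ 2 + ν s ^ 2) := ⟨0, Set.forall_mem_range.2 nonneg⟩
  obtain ⟨s₀, hs₀⟩ := convex.exists_deriv_eq_zero bdd
  have neg (s : ℝ) (hs : s < s₀) : τ s < 0 := by linarith [convex.deriv_neg_of_lt hs₀.le hs]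
  have pos (s : ℝ) (hs : s₀ < s) : 0 < τ s := by linarith [convex.deriv_pos_of_lt hs₀.ge hs]
  refine ⟨Real.tendsto_sqrt_atTop.comp (convex.tendsto_atTop bdd),
    Real.tendsto_sqrt_atTop.comp (convex.tendsto_atBot bdd), s₀, by linarith, fun s hs ↦ ?_,
    neg, pos, fun s hs t ht hst ↦ ?_, fun s hs t ht hst ↦ ?_⟩
  · exact le_antisymm (not_lt.1 fun hlt ↦ (pos s hlt).ne' hs) (not_lt.1 fun hlt ↦ (neg s hlt).ne hs)
  · exact Real.sqrt_lt_sqrt (nonneg t) (convex.strictAntiOn_Iic hs₀.le hs ht hst)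
  · exact Real.sqrt_lt_sqrt (nonneg s) (convex.strictMonoOn_Ici hs₀.ge hs ht hst)
end

section
/- The limiting angle between the tangent and the position vector of the generating curve is π/2: τ(s)/r(s) → 0 and ν(s)/r(s) → −1 as s → +∞, while τ(s)/r(s) → 0 and ν(s)/r(s) → +1 as s → −∞. Equivalently, the complex ratio r·T/X = (τ − iν)/r tends to +i as s → +∞ and to −i as s → −∞. -/
open Filter Topology

/- Context: `h > 0`; `τ, ν : ℝ → ℝ` solve the ODE system of the generating curve of a
helicoidal surface of pitch `h` rotating with unit angular speed under mean curvature flow: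
`τ' = ((τ² + h²)/(τ² + ν² + h²))(1 + τν)`, `ν' = (τν − τ²(τ² + h²))/(τ² + ν² + h²)`,
with `r = √(τ² + ν²)` and signed curvature `k = (τ(τ² + h²) − ν)/(r² + h²)`. -/

/-!
Along the curve `(r²)' = 2τ`, and while `r` stays bounded `τ' ≥ c - M|τ|` for some constants
`c > 0` and `M`. If `τ` has constant sign, then `τ ± (M / 2) r²` would grow at least linearly, so
`r` cannot stay bounded. Hence `τ` cannot stay negative; since `τ' > 0` wherever `τ = 0`, it is
eventually positive, and then `r → ∞`. Once `r² ≥ h² + 2B`, the slope `ν / τ` decreases at rate at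
least `|h|` as long as it exceeds `-B`, so `ν / τ → -∞`. As `s → -∞` the symmetry
`(τ, ν)(s) ↦ -(τ, ν)(-s)` of the system applies.
-/

section DifferentialInequalities

variable {f f' : ℝ → ℝ} {a c B : ℝ}

lemma tendsto_atTop_of_le_hasDerivAt (hf : ∀ᶠ s in atTop, HasDerivAt f (f' s) s) (hc : 0 < c)
    (hf' : ∀ᶠ s in atTop, c ≤ f' s) : Tendsto f atTop atTop := by
  obtain ⟨a, ha⟩ := eventually_atTop.1 (hf.and hf')
  have linear_growth : ∀ s, a ≤ s → c * (s - a) + f a ≤ f s := fun s hs ↦ by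
    have := (convex_Ici a).mul_sub_le_image_sub_of_le_deriv
      (fun x hx ↦ (ha x hx).1.continuousAt.continuousWithinAt)
      (fun x hx ↦ (ha x (interior_subset hx)).1.differentiableAt.differentiableWithinAt)
      (fun x hx ↦ (ha x (interior_subset hx)).2.trans_eq
        (ha x (interior_subset hx)).1.deriv.symm)
      a Set.self_mem_Ici s hs hs
    linarith
  refine tendsto_atTop_mono' atTop ((eventually_ge_atTop a).mono linear_growth) ?_
  exact tendsto_atTop_add_const_right _ _
    ((tendsto_atTop_add_const_right _ (-a) tendsto_id).const_mul_atTop hc)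

lemma le_of_hasDerivAt_neg_of_eq (hf : ∀ s, a ≤ s → HasDerivAt f (f' s) s) (ha : f a ≤ B)
    (hB : ∀ s, a ≤ s → f s = B → f' s < 0) {s : ℝ} (hs : a ≤ s) : f s ≤ B :=
  image_le_of_deriv_right_lt_deriv_boundary (B := fun _ ↦ B)
    (fun x hx ↦ (hf x hx.1).continuousAt.continuousWithinAt)
    (fun x hx ↦ (hf x hx.1).hasDerivWithinAt) ha (fun x ↦ hasDerivAt_const x B)
    (fun x hx ↦ hB x hx.1) ⟨hs, le_rfl⟩

lemma pos_of_hasDerivAt_pos_of_eq_zero (hf : ∀ s, a ≤ s → HasDerivAt f (f' s) s)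
    (ha : 0 ≤ f a) (h0 : ∀ s, a ≤ s → f s = 0 → 0 < f' s) {s : ℝ} (hs : a < s) : 0 < f s := by
  have nonneg : ∀ t, a ≤ t → 0 ≤ f t := fun t ht ↦ neg_nonpos.1 <|
    le_of_hasDerivAt_neg_of_eq (f := -f) (fun s hs ↦ (hf s hs).neg) (neg_nonpos.2 ha)
      (fun s hs hs0 ↦ neg_lt_zero.2 (h0 s hs (neg_eq_zero.1 hs0))) ht
  refine (nonneg s hs.le).lt_of_ne' fun hs0 ↦ (h0 s hs.le hs0).ne' ?_
  have isLocalMin : IsLocalMin f s := by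
    filter_upwards [lt_mem_nhds hs] with t ht
    exact hs0.trans_le (nonneg t ht.le)
  exact isLocalMin.hasDerivAt_eq_zero (hf s hs.le)

lemma eventually_le_of_hasDerivAt_le_neg (hf : ∀ᶠ s in atTop, HasDerivAt f (f' s) s) (hc : 0 < c)
    (hB : ∀ᶠ s in atTop, B ≤ f s → f' s ≤ -c) : ∀ᶠ s in atTop, f s ≤ B := by
  have reaches : ∃ᶠ s in atTop, f s ≤ B := fun above ↦ by
    simp only [not_le] at above
    have grows : Tendsto (-f) atTop atTop :=
      tendsto_atTop_of_le_hasDerivAt (hf.mono fun s hs ↦ hs.neg) hc <| by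
        filter_upwards [hB, above] with s hs hBs
        exact le_neg_of_le_neg (hs hBs.le)
    obtain ⟨s, hs, hBs⟩ := ((grows.eventually_ge_atTop (-B)).and above).exists
    exact (neg_le_neg_iff.1 hs).not_gt hBs
  obtain ⟨a, ha⟩ := eventually_atTop.1 (hf.and hB)
  obtain ⟨b, hab, hb⟩ := frequently_atTop.1 reaches a
  filter_upwards [eventually_ge_atTop b] with s hs
  refine le_of_hasDerivAt_neg_of_eq (fun t ht ↦ (ha t (hab.trans ht)).1) hb (fun t ht htB ↦ ?_) hs
  exact ((ha t (hab.trans ht)).2 htB.ge).trans_lt (neg_lt_zero.2 hc)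

end DifferentialInequalities

section Direction

variable {ι : Type*} {l : Filter ι} {x y : ι → ℝ}

lemma cos_arctan_div_of_pos {t v : ℝ} (ht : 0 < t) :
    Real.cos (Real.arctan (v / t)) = t / √(t ^ 2 + v ^ 2) := by
  have : t ^ 2 + v ^ 2 = t ^ 2 * (1 + (v / t) ^ 2) := by field_simp
  rw [Real.cos_arctan, this, Real.sqrt_mul (sq_nonneg t), Real.sqrt_sq ht.le]
  field_simp

lemma sin_arctan_div_of_pos {t v : ℝ} (ht : 0 < t) :
    Real.sin (Real.arctan (v / t)) = v / √(t ^ 2 + v ^ 2) := by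
  rw [← Real.tan_mul_cos (Real.cos_arctan_pos _).ne', Real.tan_arctan, cos_arctan_div_of_pos ht]
  field_simp

lemma tendsto_div_sqrt_of_slope_atBot (hx : ∀ᶠ i in l, 0 < x i)
    (hslope : Tendsto (fun i ↦ y i / x i) l atBot) :
    Tendsto (fun i ↦ x i / √(x i ^ 2 + y i ^ 2)) l (𝓝 0) ∧
    Tendsto (fun i ↦ y i / √(x i ^ 2 + y i ^ 2)) l (𝓝 (-1)) := by
  have angle : Tendsto (fun i ↦ Real.arctan (y i / x i)) l (𝓝 (-(Real.pi / 2))) :=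
    (Real.tendsto_arctan_atBot.mono_right nhdsWithin_le_nhds).comp hslope
  constructor
  · have cos_angle := (Real.continuous_cos.tendsto _).comp angle
    rw [Real.cos_neg, Real.cos_pi_div_two] at cos_angle
    exact cos_angle.congr' (hx.mono fun i hi ↦ cos_arctan_div_of_pos hi)
  · have sin_angle := (Real.continuous_sin.tendsto _).comp angle
    rw [Real.sin_neg, Real.sin_pi_div_two] at sin_angle
    exact sin_angle.congr' (hx.mono fun i hi ↦ sin_arctan_div_of_pos hi)

lemma tendsto_sub_mul_I_div {r : ι → ℝ} {a b : ℝ} (hx : Tendsto (fun i ↦ x i / r i) l (𝓝 a))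
    (hy : Tendsto (fun i ↦ y i / r i) l (𝓝 b)) :
    Tendsto (fun i ↦ ((x i : ℂ) - (y i : ℂ) * Complex.I) / (r i : ℂ)) l
      (𝓝 ((a : ℂ) - (b : ℂ) * Complex.I)) := by
  refine (hx.ofReal.sub (hy.ofReal.mul_const Complex.I)).congr fun i ↦ ?_
  push_cast
  ring

end Direction

/-- The system satisfied by the tangential and normal components `τ = ⟨X, T⟩`, `ν = ⟨X, N⟩` of the
arc-length parametrized generating curve `X` of a helicoidal surface of pitch `h` that rotates with
unit angular speed under mean curvature flow. The curve is represented by `τ` and `ν` alone. -/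
structure IsGeneratingCurve (h : ℝ) (τ ν : ℝ → ℝ) : Prop where
  hasDerivAt_tangential : ∀ s, HasDerivAt τ
    ((τ s ^ 2 + h ^ 2) / (τ s ^ 2 + ν s ^ 2 + h ^ 2) * (1 + τ s * ν s)) s
  hasDerivAt_normal : ∀ s, HasDerivAt ν
    ((τ s * ν s - τ s ^ 2 * (τ s ^ 2 + h ^ 2)) / (τ s ^ 2 + ν s ^ 2 + h ^ 2)) s

lemma tangential_deriv_lower_bound {h t v C : ℝ} (hh : h ≠ 0) (hC : t ^ 2 + v ^ 2 ≤ C) :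
    h ^ 2 / (C + h ^ 2) ≤
      (t ^ 2 + h ^ 2) / (t ^ 2 + v ^ 2 + h ^ 2) * (1 + t * v) + (C + 1) * |t| := by
  set q := (t ^ 2 + h ^ 2) / (t ^ 2 + v ^ 2 + h ^ 2)
  have q_nonneg : 0 ≤ q := by positivity
  have q_le_one : q ≤ 1 := div_le_one_of_le₀ (by nlinarith only [sq_nonneg v]) (by positivity)
  have q_lower : h ^ 2 / (C + h ^ 2) ≤ q := by
    dsimp only [q]
    gcongr
    exact le_add_of_nonneg_left (sq_nonneg t)
  have abs_v_le : |v| ≤ C + 1 := by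
    nlinarith only [sq_nonneg (|v| - 1), sq_abs v, sq_nonneg t, hC, abs_nonneg v]
  have cross_term : -(q * (t * v)) ≤ (C + 1) * |t| :=
    calc -(q * (t * v)) ≤ |q * (t * v)| := neg_le_abs _
      _ = q * (|v| * |t|) := by rw [abs_mul, abs_mul, abs_of_nonneg q_nonneg, mul_comm |t|]
      _ ≤ |v| * |t| := mul_le_of_le_one_left (by positivity) q_le_one
      _ ≤ (C + 1) * |t| := by gcongr
  linarith

lemma slope_deriv_upper_bound {h t v B : ℝ} (ht : 0 < t) (hB : 0 ≤ B)
    (hslope : -B ≤ v / t) (hr : h ^ 2 + 2 * B ≤ t ^ 2 + v ^ 2) :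
    -((t ^ 2 + v ^ 2) * t * (t ^ 2 + h ^ 2) + v * h ^ 2) / (t ^ 2 * (t ^ 2 + v ^ 2 + h ^ 2)) ≤
      -|h| := by
  rw [neg_div, neg_le_neg_iff, le_div_iff₀ (by positivity)]
  have normal_lower : -(B * t) ≤ v := by rwa [le_div_iff₀ ht, neg_mul] at hslope
  have am_gm : 2 * |h| * t ≤ t ^ 2 + h ^ 2 := by
    nlinarith only [sq_nonneg (t - |h|), sq_abs h]
  have excess_nonneg : 0 ≤ t ^ 2 + v ^ 2 - B := by nlinarith only [hr, hB, sq_nonneg h]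
  calc |h| * (t ^ 2 * (t ^ 2 + v ^ 2 + h ^ 2))
      ≤ |h| * (t ^ 2 * (2 * (t ^ 2 + v ^ 2 - B))) := by gcongr; linarith
    _ = (t ^ 2 + v ^ 2 - B) * t * (2 * |h| * t) := by ring
    _ ≤ (t ^ 2 + v ^ 2 - B) * t * (t ^ 2 + h ^ 2) := by gcongr
    _ = (t ^ 2 + v ^ 2) * t * (t ^ 2 + h ^ 2) + -(B * t) * h ^ 2 - B * t ^ 3 := by ring
    _ ≤ (t ^ 2 + v ^ 2) * t * (t ^ 2 + h ^ 2) + -(B * t) * h ^ 2 :=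
        sub_le_self _ (by positivity)
    _ ≤ (t ^ 2 + v ^ 2) * t * (t ^ 2 + h ^ 2) + v * h ^ 2 := by gcongr

namespace IsGeneratingCurve

variable {h : ℝ} {τ ν : ℝ → ℝ}

lemma reflect (hc : IsGeneratingCurve h τ ν) :
    IsGeneratingCurve h (fun s ↦ -τ (-s)) (fun s ↦ -ν (-s)) where
  hasDerivAt_tangential s :=
    ((hc.hasDerivAt_tangential (-s)).scomp s (hasDerivAt_neg s)).neg.congr_deriv (by simp)
  hasDerivAt_normal s :=
    ((hc.hasDerivAt_normal (-s)).scomp s (hasDerivAt_neg s)).neg.congr_deriv (by simp)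

lemma hasDerivAt_normSq (hc : IsGeneratingCurve h τ ν) (hh : h ≠ 0) (s : ℝ) :
    HasDerivAt (fun s ↦ τ s ^ 2 + ν s ^ 2) (2 * τ s) s := by
  have : τ s ^ 2 + ν s ^ 2 + h ^ 2 ≠ 0 := by positivity
  refine (((hc.hasDerivAt_tangential s).pow 2).add
    ((hc.hasDerivAt_normal s).pow 2)).congr_deriv ?_
  push_cast
  field_simp
  ring

lemma hasDerivAt_slope (hc : IsGeneratingCurve h τ ν) {s : ℝ} (hs : τ s ≠ 0) :
    HasDerivAt (fun s ↦ ν s / τ s)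
      (-((τ s ^ 2 + ν s ^ 2) * τ s * (τ s ^ 2 + h ^ 2) + ν s * h ^ 2) /
        (τ s ^ 2 * (τ s ^ 2 + ν s ^ 2 + h ^ 2))) s := by
  have : τ s ^ 2 + ν s ^ 2 + h ^ 2 ≠ 0 := by positivity
  refine ((hc.hasDerivAt_normal s).div (hc.hasDerivAt_tangential s) hs).congr_deriv ?_
  field_simp
  ring

lemma not_eventually_normSq_le (hc : IsGeneratingCurve h τ ν) (hh : h ≠ 0) {σ : ℝ}
    (hσ : ∀ᶠ s in atTop, |τ s| = σ * τ s) (C : ℝ) :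
    ¬ ∀ᶠ s in atTop, τ s ^ 2 + ν s ^ 2 ≤ C := by
  intro bounded
  obtain ⟨s₀, hs₀⟩ := bounded.exists
  have C_nonneg : 0 ≤ C := (by positivity : 0 ≤ τ s₀ ^ 2 + ν s₀ ^ 2).trans hs₀
  have grows : Tendsto (fun s ↦ τ s + σ * (C + 1) / 2 * (τ s ^ 2 + ν s ^ 2)) atTop atTop := by
    refine tendsto_atTop_of_le_hasDerivAt (c := h ^ 2 / (C + h ^ 2)) (.of_forall fun s ↦
      (hc.hasDerivAt_tangential s).add ((hc.hasDerivAt_normSq hh s).const_mul _))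
      (by positivity) ?_
    filter_upwards [bounded, hσ] with s hs hσs
    exact (tangential_deriv_lower_bound hh hs).trans_eq (by rw [hσs]; ring)
  obtain ⟨s, hs, hlarge⟩ := (bounded.and (grows.eventually_gt_atTop
    (C + 1 + |σ * (C + 1) / 2| * C))).exists
  have tangential_le : τ s ≤ C + 1 := by
    nlinarith only [hs, C_nonneg, sq_nonneg (τ s - 1), sq_nonneg (ν s)]
  have weighted_le : σ * (C + 1) / 2 * (τ s ^ 2 + ν s ^ 2) ≤ |σ * (C + 1) / 2| * C := by
    gcongr
    exact le_abs_self _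
  linarith

lemma exists_tangential_nonneg (hc : IsGeneratingCurve h τ ν) (hh : h ≠ 0) : ∃ a, 0 ≤ τ a := by
  by_contra! τ_neg
  have normSq_antitone : Antitone fun s ↦ τ s ^ 2 + ν s ^ 2 :=
    antitone_of_hasDerivAt_nonpos (hc.hasDerivAt_normSq hh) fun s ↦
      mul_nonpos_of_nonneg_of_nonpos zero_le_two (τ_neg s).le
  refine hc.not_eventually_normSq_le hh (σ := -1) (.of_forall fun s ↦ ?_) (τ 0 ^ 2 + ν 0 ^ 2) ?_
  · rw [abs_of_neg (τ_neg s), neg_one_mul]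
  · exact (eventually_ge_atTop 0).mono fun s hs ↦ normSq_antitone hs

lemma eventually_tangential_pos (hc : IsGeneratingCurve h τ ν) (hh : h ≠ 0) :
    ∀ᶠ s in atTop, 0 < τ s := by
  obtain ⟨a, ha⟩ := hc.exists_tangential_nonneg hh
  filter_upwards [eventually_gt_atTop a] with s hs
  refine pos_of_hasDerivAt_pos_of_eq_zero (fun t _ ↦ hc.hasDerivAt_tangential t) ha
    (fun t _ ht ↦ ?_) hs
  rw [ht, zero_mul, add_zero, mul_one]
  positivity

lemma tendsto_normSq_atTop (hc : IsGeneratingCurve h τ ν) (hh : h ≠ 0) :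
    Tendsto (fun s ↦ τ s ^ 2 + ν s ^ 2) atTop atTop := by
  have τ_pos := hc.eventually_tangential_pos hh
  obtain ⟨a, ha⟩ := eventually_atTop.1 τ_pos
  have normSq_monotoneOn : MonotoneOn (fun s ↦ τ s ^ 2 + ν s ^ 2) (Set.Ici a) :=
    monotoneOn_of_hasDerivWithinAt_nonneg (convex_Ici a)
      (fun s _ ↦ (hc.hasDerivAt_normSq hh s).continuousAt.continuousWithinAt)
      (fun s _ ↦ (hc.hasDerivAt_normSq hh s).hasDerivWithinAt)
      (fun s hs ↦ mul_nonneg zero_le_two (ha s (interior_subset hs)).le)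
  refine tendsto_atTop.2 fun C ↦ ?_
  have reaches : ∃ᶠ s in atTop, C ≤ τ s ^ 2 + ν s ^ 2 := fun below ↦
    hc.not_eventually_normSq_le hh (σ := 1)
      (τ_pos.mono fun s hs ↦ by rw [abs_of_pos hs, one_mul]) C
      (below.mono fun s hs ↦ (not_le.1 hs).le)
  obtain ⟨b, hab, hb⟩ := frequently_atTop.1 reaches a
  filter_upwards [eventually_ge_atTop b] with s hs
  exact hb.trans (normSq_monotoneOn hab (hab.trans hs) hs)

lemma tendsto_slope_atBot (hc : IsGeneratingCurve h τ ν) (hh : h ≠ 0) :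
    Tendsto (fun s ↦ ν s / τ s) atTop atBot := by
  have τ_pos := hc.eventually_tangential_pos hh
  refine tendsto_atBot.2 fun b ↦ ?_
  suffices ∀ᶠ s in atTop, ν s / τ s ≤ -|b| from this.mono fun s hs ↦ hs.trans (neg_abs_le b)
  refine eventually_le_of_hasDerivAt_le_neg
    (τ_pos.mono fun s hs ↦ hc.hasDerivAt_slope hs.ne') (abs_pos.2 hh) ?_
  filter_upwards [τ_pos, (hc.tendsto_normSq_atTop hh).eventually_ge_atTop (h ^ 2 + 2 * |b|)]
    with s hs hlarge hslope
  exact slope_deriv_upper_bound hs (abs_nonneg b) hslope hlarge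

lemma tendsto_direction_atTop (hc : IsGeneratingCurve h τ ν) (hh : h ≠ 0) :
    Tendsto (fun s ↦ τ s / √(τ s ^ 2 + ν s ^ 2)) atTop (𝓝 0) ∧
    Tendsto (fun s ↦ ν s / √(τ s ^ 2 + ν s ^ 2)) atTop (𝓝 (-1)) :=
  tendsto_div_sqrt_of_slope_atBot (hc.eventually_tangential_pos hh) (hc.tendsto_slope_atBot hh)

lemma tendsto_direction_atBot (hc : IsGeneratingCurve h τ ν) (hh : h ≠ 0) :
    Tendsto (fun s ↦ τ s / √(τ s ^ 2 + ν s ^ 2)) atBot (𝓝 0) ∧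
    Tendsto (fun s ↦ ν s / √(τ s ^ 2 + ν s ^ 2)) atBot (𝓝 1) := by
  obtain ⟨tangential, normal⟩ := hc.reflect.tendsto_direction_atTop hh
  constructor
  · simpa [Function.comp_def, neg_div] using (tangential.comp tendsto_neg_atBot_atTop).neg
  · simpa [Function.comp_def, neg_div] using (normal.comp tendsto_neg_atBot_atTop).neg

end IsGeneratingCurve

/-- Lemma 4.8. The limiting angle between the tangent and the position
vector is `π/2`: `τ/r → 0` and `ν/r → −1` as `s → +∞`, while `τ/r → 0` and `ν/r → +1`
as `s → −∞` (i.e. `rT/X = (τ − iν)/r → ±i`). -/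
theorem limiting_growing_direction
    (h : ℝ) (hh : 0 < h) (τ ν : ℝ → ℝ)
    (hτ : ∀ s : ℝ, HasDerivAt τ
      ((τ s ^ 2 + h ^ 2) / (τ s ^ 2 + ν s ^ 2 + h ^ 2) * (1 + τ s * ν s)) s)
    (hν : ∀ s : ℝ, HasDerivAt ν
      ((τ s * ν s - τ s ^ 2 * (τ s ^ 2 + h ^ 2)) / (τ s ^ 2 + ν s ^ 2 + h ^ 2)) s)
    (r : ℝ → ℝ) (hr : ∀ s : ℝ, r s = Real.sqrt (τ s ^ 2 + ν s ^ 2)) :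
    Tendsto (fun s => τ s / r s) atTop (𝓝 0) ∧
    Tendsto (fun s => ν s / r s) atTop (𝓝 (-1)) ∧
    Tendsto (fun s => τ s / r s) atBot (𝓝 0) ∧
    Tendsto (fun s => ν s / r s) atBot (𝓝 1) ∧
    Tendsto (fun s => ((τ s : ℂ) - (ν s : ℂ) * Complex.I) / (r s : ℂ))
      atTop (𝓝 Complex.I) ∧
    Tendsto (fun s => ((τ s : ℂ) - (ν s : ℂ) * Complex.I) / (r s : ℂ))
      atBot (𝓝 (-Complex.I)) := by
  obtain rfl : r = fun s ↦ √(τ s ^ 2 + ν s ^ 2) := funext hr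
  have hc : IsGeneratingCurve h τ ν := ⟨hτ, hν⟩
  obtain ⟨tangential_atTop, normal_atTop⟩ := hc.tendsto_direction_atTop hh.ne'
  obtain ⟨tangential_atBot, normal_atBot⟩ := hc.tendsto_direction_atBot hh.ne'
  refine ⟨tangential_atTop, normal_atTop, tangential_atBot, normal_atBot, ?_, ?_⟩
  · simpa using tendsto_sub_mul_I_div tangential_atTop normal_atTop
  · simpa using tendsto_sub_mul_I_div tangential_atBot normal_atBot
end

section
/- Each arm of the generating curve has infinite total curvature: the tangent angle θ(s) = θ(0) + ∫₀ˢ k(t) dt tends to +∞ both as s → +∞ and as s → −∞. In other words, ∫_{s₀}^{∞} k(t) dt = +∞ and ∫_{−∞}^{s₀} k(t) dt = −∞ for any s₀. -/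
open Filter Topology

/- Context: `h > 0`; `τ, ν : ℝ → ℝ` solve the ODE system of the generating curve of a
helicoidal surface of pitch `h` rotating with unit angular speed under mean curvature flow:
`τ' = ((τ² + h²)/(τ² + ν² + h²))(1 + τν)`, `ν' = (τν − τ²(τ² + h²))/(τ² + ν² + h²)`,
with `r = √(τ² + ν²)` and signed curvature `k = (τ(τ² + h²) − ν)/(r² + h²)`. -/

/-!
The function `ν - arctan (τ / h) / h` has derivative `-(1 + τ² (τ² + h²)) / (τ² + ν² + h²)`, which
is bounded away from zero as long as `ν` is bounded. Hence it tends to `-∞` at `+∞`, and so does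
`ν`, because the two differ by a bounded amount. In particular `r² → ∞`; as `(r²)' = 2 τ`, the
function `τ` is positive somewhere, and it stays nonnegative from then on because `τ' > 0` where
`τ = 0`. Once `τ ≥ 0 ≥ ν` we have `k ≥ h² τ / (r² + h²)`, which is the derivative of
`h² / 2 * log (r² + h²) → ∞`. The other arm follows from the symmetry
`(τ, ν) ↦ (-τ (-s), -ν (-s))`.
-/

section Comparison

variable {f f' g g' : ℝ → ℝ}

theorem tendsto_atTop_of_hasDerivAt_le (hf : ∀ᶠ x in atTop, HasDerivAt f (f' x) x)
    (hg : ∀ᶠ x in atTop, HasDerivAt g (g' x) x) (hle : ∀ᶠ x in atTop, g' x ≤ f' x)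
    (hg_top : Tendsto g atTop atTop) : Tendsto f atTop atTop := by
  obtain ⟨a, ha⟩ := eventually_atTop.1 (hf.and (hg.and hle))
  have hderiv : ∀ x ∈ Set.Ici a, HasDerivAt (fun x => f x - g x) (f' x - g' x) x :=
    fun x hx => (ha x hx).1.sub (ha x hx).2.1
  have hmono : MonotoneOn (fun x => f x - g x) (Set.Ici a) :=
    monotoneOn_of_hasDerivWithinAt_nonneg (convex_Ici a)
      (fun x hx => (hderiv x hx).continuousAt.continuousWithinAt)
      (fun x hx => (hderiv x (interior_subset hx)).hasDerivWithinAt)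
      (fun x hx => sub_nonneg.2 (ha x (interior_subset hx)).2.2)
  refine tendsto_atTop_mono' atTop ?_ (tendsto_atTop_add_const_right _ (f a - g a) hg_top)
  filter_upwards [eventually_ge_atTop a] with x hx
  linarith [hmono Set.self_mem_Ici hx hx]

theorem tendsto_atBot_of_hasDerivAt_le_neg_comp (hg : Continuous g) (hg_pos : ∀ y, 0 < g y)
    (hf : ∀ x, HasDerivAt f (f' x) x) (hle : ∀ x, f' x ≤ -g (f x)) :
    Tendsto f atTop atBot := by
  have hanti : Antitone f :=
    antitone_of_hasDerivAt_nonpos hf fun x => (hle x).trans (neg_nonpos.2 (hg_pos _).le)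
  refine (tendsto_atTop_of_antitone hanti).resolve_right ?_
  rintro ⟨l, hl⟩
  have hspeed : ∀ᶠ x in atTop, g l / 2 ≤ -f' x := by
    filter_upwards [((hg.tendsto l).comp hl).eventually_const_lt (half_lt_self (hg_pos l))]
      with x hx
    exact hx.le.trans (le_neg_of_le_neg (hle x))
  have hbot : Tendsto (fun x => -f x) atTop atTop :=
    tendsto_atTop_of_hasDerivAt_le (.of_forall fun x => (hf x).neg)
      (.of_forall fun x => hasDerivAt_mul_const (x := x) (g l / 2)) hspeed
      (tendsto_id.atTop_mul_const (half_pos (hg_pos l)))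
  exact not_tendsto_nhds_of_tendsto_atTop hbot _ hl.neg

end Comparison

/-- The pair `(τ, ν) = (⟨X, T⟩, ⟨X, N⟩)` of support functions of the generating curve of a
helicoidal surface of pitch `h` that rotates with unit angular speed under mean curvature flow,
encoded by the first-order system that it satisfies on the whole line. -/
structure IsHelicoidalRotator (h : ℝ) (τ ν : ℝ → ℝ) : Prop where
  hasDerivAt_tangential (s : ℝ) : HasDerivAt τ
    ((τ s ^ 2 + h ^ 2) / (τ s ^ 2 + ν s ^ 2 + h ^ 2) * (1 + τ s * ν s)) s
  hasDerivAt_normal (s : ℝ) : HasDerivAt ν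
    ((τ s * ν s - τ s ^ 2 * (τ s ^ 2 + h ^ 2)) / (τ s ^ 2 + ν s ^ 2 + h ^ 2)) s

namespace IsHelicoidalRotator

/-- The signed curvature of the generating curve with support functions `τ` and `ν`. -/
noncomputable def curvature (h : ℝ) (τ ν : ℝ → ℝ) (s : ℝ) : ℝ :=
  (τ s * (τ s ^ 2 + h ^ 2) - ν s) / (τ s ^ 2 + ν s ^ 2 + h ^ 2)

/-- A Lyapunov function of the system, at bounded distance from `ν`. The correction term is chosen
so that the terms `τ ν` of the system cancel in its derivative. -/
noncomputable def lyapunov (h : ℝ) (τ ν : ℝ → ℝ) (s : ℝ) : ℝ :=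
  ν s - Real.arctan (τ s / h) / h

variable {h : ℝ} {τ ν : ℝ → ℝ}

theorem abs_sub_lyapunov_le (h : ℝ) (τ ν : ℝ → ℝ) (s : ℝ) :
    |ν s - lyapunov h τ ν s| ≤ Real.pi / 2 / |h| := by
  rw [lyapunov, sub_sub_cancel, abs_div]
  gcongr
  exact abs_le.2 ⟨(Real.neg_pi_div_two_lt_arctan _).le, (Real.arctan_lt_pi_div_two _).le⟩

theorem neg_comp_neg (H : IsHelicoidalRotator h τ ν) :
    IsHelicoidalRotator h (fun s => -τ (-s)) (fun s => -ν (-s)) where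
  hasDerivAt_tangential s :=
    ((H.hasDerivAt_tangential (-s)).scomp s (hasDerivAt_neg s)).neg.congr_deriv (by simp)
  hasDerivAt_normal s :=
    ((H.hasDerivAt_normal (-s)).scomp s (hasDerivAt_neg s)).neg.congr_deriv (by simp)

theorem curvature_neg_comp_neg (h : ℝ) (τ ν : ℝ → ℝ) (s : ℝ) :
    curvature h (fun s => -τ (-s)) (fun s => -ν (-s)) s = -curvature h τ ν (-s) := by
  simp only [curvature]
  ring

theorem continuous_curvature (hh : h ≠ 0) (H : IsHelicoidalRotator h τ ν) :
    Continuous (curvature h τ ν) := by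
  have hτ : Continuous τ :=
    continuous_iff_continuousAt.2 fun s => (H.hasDerivAt_tangential s).continuousAt
  have hν : Continuous ν :=
    continuous_iff_continuousAt.2 fun s => (H.hasDerivAt_normal s).continuousAt
  unfold curvature
  exact Continuous.div (by fun_prop) (by fun_prop) fun s => by positivity

theorem hasDerivAt_sq_add_sq_add_sq (hh : h ≠ 0) (H : IsHelicoidalRotator h τ ν) (s : ℝ) :
    HasDerivAt (fun s => τ s ^ 2 + ν s ^ 2 + h ^ 2) (2 * τ s) s := by
  refine ((((H.hasDerivAt_tangential s).pow 2).add
    ((H.hasDerivAt_normal s).pow 2)).add_const (h ^ 2)).congr_deriv ?_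
  field_simp
  ring

theorem hasDerivAt_lyapunov (hh : h ≠ 0) (H : IsHelicoidalRotator h τ ν) (s : ℝ) :
    HasDerivAt (lyapunov h τ ν)
      (-((1 + τ s ^ 2 * (τ s ^ 2 + h ^ 2)) / (τ s ^ 2 + ν s ^ 2 + h ^ 2))) s := by
  refine ((H.hasDerivAt_normal s).sub
    (((H.hasDerivAt_tangential s).div_const h).arctan.div_const h)).congr_deriv ?_
  have hsq : 1 + (τ s / h) ^ 2 = (τ s ^ 2 + h ^ 2) / h ^ 2 := by
    field_simp
    ring
  rw [hsq]
  field_simp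
  ring

theorem inv_one_add_sq_add_sq_le_div (hh : h ≠ 0) (t n : ℝ) :
    (1 + h ^ 2 + n ^ 2)⁻¹ ≤ (1 + t ^ 2 * (t ^ 2 + h ^ 2)) / (t ^ 2 + n ^ 2 + h ^ 2) := by
  rw [inv_eq_one_div, div_le_div_iff₀ (by positivity) (by positivity)]
  have hmixed : 0 ≤ t ^ 2 * (t ^ 2 + h ^ 2) * (h ^ 2 + n ^ 2) := by positivity
  nlinarith [sq_nonneg (t ^ 2 - 1), mul_nonneg (sq_nonneg t) (sq_nonneg h)]

theorem tendsto_lyapunov_atBot (hh : h ≠ 0) (H : IsHelicoidalRotator h τ ν) :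
    Tendsto (lyapunov h τ ν) atTop atBot := by
  have hpos (y : ℝ) : 0 < 1 + h ^ 2 + (|y| + Real.pi / 2 / |h|) ^ 2 := by positivity
  refine tendsto_atBot_of_hasDerivAt_le_neg_comp
    (g := fun y => (1 + h ^ 2 + (|y| + Real.pi / 2 / |h|) ^ 2)⁻¹)
    (Continuous.inv₀ (by fun_prop) fun y => (hpos y).ne') (fun y => inv_pos.2 (hpos y))
    (H.hasDerivAt_lyapunov hh) fun s => neg_le_neg ?_
  have hν : |ν s| ≤ |lyapunov h τ ν s| + Real.pi / 2 / |h| := by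
    linarith [abs_sub_abs_le_abs_sub (ν s) (lyapunov h τ ν s), abs_sub_lyapunov_le h τ ν s]
  refine le_trans ?_ (inv_one_add_sq_add_sq_le_div hh (τ s) (ν s))
  rw [← sq_abs (ν s)]
  gcongr

theorem tendsto_normal_atBot (hh : h ≠ 0) (H : IsHelicoidalRotator h τ ν) :
    Tendsto ν atTop atBot := by
  refine tendsto_atBot_mono (fun s => ?_)
    (tendsto_atBot_add_const_right _ (Real.pi / 2 / |h|) (H.tendsto_lyapunov_atBot hh))
  linarith [le_of_abs_le (abs_sub_lyapunov_le h τ ν s)]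

theorem tendsto_sq_add_sq_add_sq_atTop (hh : h ≠ 0) (H : IsHelicoidalRotator h τ ν) :
    Tendsto (fun s => τ s ^ 2 + ν s ^ 2 + h ^ 2) atTop atTop := by
  refine tendsto_atTop_mono (fun s => ?_)
    ((tendsto_pow_atTop two_ne_zero).comp
      (tendsto_neg_atBot_atTop.comp (H.tendsto_normal_atBot hh)))
  simp only [Function.comp_apply, neg_sq]
  linarith [sq_nonneg (τ s), sq_nonneg h]

theorem exists_tangential_pos (hh : h ≠ 0) (H : IsHelicoidalRotator h τ ν) : ∃ s, 0 < τ s := by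
  by_contra! hτ
  have hanti : Antitone fun s => τ s ^ 2 + ν s ^ 2 + h ^ 2 :=
    antitone_of_hasDerivAt_nonpos (H.hasDerivAt_sq_add_sq_add_sq hh)
      fun s => mul_nonpos_of_nonneg_of_nonpos zero_le_two (hτ s)
  obtain ⟨s, hs, hgt⟩ := ((eventually_ge_atTop 0).and
    ((H.tendsto_sq_add_sq_add_sq_atTop hh).eventually_gt_atTop _)).exists
  exact (hanti hs).not_gt hgt

theorem tangential_nonneg_of_le (hh : h ≠ 0) (H : IsHelicoidalRotator h τ ν) {a s : ℝ}
    (ha : 0 ≤ τ a) (has : a ≤ s) : 0 ≤ τ s := by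
  refine image_le_of_deriv_right_lt_deriv_boundary (f := fun _ => 0) (f' := fun _ => 0)
    continuousOn_const (fun x _ => hasDerivWithinAt_const ..) ha H.hasDerivAt_tangential
    (fun x _ hx => ?_) ⟨has, le_rfl⟩
  rw [← hx]
  simp only [zero_mul, add_zero, mul_one]
  positivity

theorem eventually_le_curvature (hh : h ≠ 0) (H : IsHelicoidalRotator h τ ν) :
    ∀ᶠ s in atTop,
      h ^ 2 / 2 * (2 * τ s / (τ s ^ 2 + ν s ^ 2 + h ^ 2)) ≤ curvature h τ ν s := by
  obtain ⟨a, ha⟩ := H.exists_tangential_pos hh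
  filter_upwards [eventually_ge_atTop a, (H.tendsto_normal_atBot hh).eventually_le_atBot 0]
    with s has hν
  have hτ : 0 ≤ τ s := H.tangential_nonneg_of_le hh ha.le has
  rw [curvature, ← mul_div_assoc]
  gcongr
  linarith [pow_nonneg hτ 3]

theorem tendsto_integral_curvature_atTop (hh : h ≠ 0) (H : IsHelicoidalRotator h τ ν) (a : ℝ) :
    Tendsto (fun s => ∫ t in a..s, curvature h τ ν t) atTop atTop :=
  tendsto_atTop_of_hasDerivAt_le
    (.of_forall fun s => ((H.continuous_curvature hh).integral_hasStrictDerivAt a s).hasDerivAt)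
    (.of_forall fun s =>
      ((H.hasDerivAt_sq_add_sq_add_sq hh s).log (by positivity)).const_mul (h ^ 2 / 2))
    (H.eventually_le_curvature hh)
    ((Real.tendsto_log_atTop.comp (H.tendsto_sq_add_sq_add_sq_atTop hh)).const_mul_atTop
      (by positivity))

theorem tendsto_integral_curvature_atBot (hh : h ≠ 0) (H : IsHelicoidalRotator h τ ν) (a : ℝ) :
    Tendsto (fun s => ∫ t in a..s, curvature h τ ν t) atBot atTop := by
  refine ((H.neg_comp_neg.tendsto_integral_curvature_atTop hh (-a)).comp
    tendsto_neg_atBot_atTop).congr fun s => ?_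
  simp only [Function.comp_apply, curvature_neg_comp_neg, intervalIntegral.integral_neg,
    intervalIntegral.integral_comp_neg, neg_neg]
  exact (intervalIntegral.integral_symm s a).symm

end IsHelicoidalRotator

/-- Lemma 4.10. Each arm has infinite total curvature: the tangent angle
`θ(s) = θ₀ + ∫₀ˢ k` tends to `+∞` in both directions; i.e. `∫_{s₀}^∞ k = +∞` and
`∫_{−∞}^{s₀} k = −∞`. -/
theorem infinite_total_curvature
    (h : ℝ) (hh : 0 < h) (τ ν : ℝ → ℝ)
    (hτ : ∀ s : ℝ, HasDerivAt τ
      ((τ s ^ 2 + h ^ 2) / (τ s ^ 2 + ν s ^ 2 + h ^ 2) * (1 + τ s * ν s)) s)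
    (hν : ∀ s : ℝ, HasDerivAt ν
      ((τ s * ν s - τ s ^ 2 * (τ s ^ 2 + h ^ 2)) / (τ s ^ 2 + ν s ^ 2 + h ^ 2)) s)
    (k : ℝ → ℝ)
    (hk : ∀ s : ℝ, k s = (τ s * (τ s ^ 2 + h ^ 2) - ν s) / (τ s ^ 2 + ν s ^ 2 + h ^ 2))
    (θ₀ : ℝ) :
    Tendsto (fun s => θ₀ + ∫ t in (0:ℝ)..s, k t) atTop atTop ∧
    Tendsto (fun s => θ₀ + ∫ t in (0:ℝ)..s, k t) atBot atTop := by
  have H : IsHelicoidalRotator h τ ν := ⟨hτ, hν⟩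
  obtain rfl : k = IsHelicoidalRotator.curvature h τ ν := funext hk
  exact ⟨tendsto_atTop_add_const_left _ _ (H.tendsto_integral_curvature_atTop hh.ne' 0),
    tendsto_atTop_add_const_left _ _ (H.tendsto_integral_curvature_atBot hh.ne' 0)⟩
end
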